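/- There exists an absolute constant c > 0 such that for every t > 1 and all x, w with 1 < x < w/2 and w > 1 + 2√t, one has p₁(t,x,w) ≥ c · min(1, ln x / ln(3t)) · p(t,x,w). -/

import Mathlib

open Real MeasureTheory

/-- Modified Bessel function of the first kind, order 0. -/
noncomputable def I0 (z : ℝ) : ℝ := ∑' n : ℕ, (z/2)^(2*n) / ((n.factorial : ℝ))^2

/-- Modified Bessel function of the first kind, order 1. -/
noncomputable def I1 (z : ℝ) : ℝ :=
  ∑' n : ℕ, (z/2)^(2*n+1) / ((n.factorial : ℝ) * ((n+1).factorial : ℝ))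

/-- Heat kernel of the Bessel operator `d²/dx² + (1/x) d/dx` on `(0,∞)`
with respect to the measure `y dy`. -/
noncomputable def pk (t x y : ℝ) : ℝ :=
  t⁻¹ * Real.exp (-(x^2 + y^2)/(2*t)) * I0 (x*y/t)

/-- The function `h` from (AC): Dirichlet heat kernel of `(1/2) d²/dx²` on `(1,∞)`
multiplied by `(xy)⁻¹`. -/
noncomputable def hker (t x y : ℝ) : ℝ :=
  (2*Real.pi*t)^(-(1:ℝ)/2) * (x*y)⁻¹ *
    (Real.exp (-(x-y)^2/(2*t)) - Real.exp (-(x+y-2)^2/(2*t)))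

/-- Bundled hypotheses on the Dirichlet heat kernel `p₁` of the Bessel operator on
`(1,∞)` and on the density `q` of the first hitting time of `1` by the
2-dimensional Bessel process. -/
structure BesselHK (p₁ : ℝ → ℝ → ℝ → ℝ) (q : ℝ → ℝ → ℝ) : Prop where
  meas_p₁ : Measurable fun z : ℝ × ℝ × ℝ => p₁ z.1 z.2.1 z.2.2
  meas_q : Measurable fun z : ℝ × ℝ => q z.1 z.2
  p₁_nonneg : ∀ ⦃t x y : ℝ⦄, 0 < t → 1 < x → 1 < y → 0 ≤ p₁ t x y
  q_nonneg : ∀ ⦃x s : ℝ⦄, 1 < x → 0 < s → 0 ≤ q x s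
  hunt : ∀ ⦃t x y : ℝ⦄, 0 < t → 1 < x → 1 < y →
    p₁ t x y = pk t x y - ∫ u in Set.Ioo 0 t, q x u * pk (t-u) 1 y
  symm : ∀ ⦃t x y : ℝ⦄, 0 < t → 1 < x → 1 < y → p₁ t x y = p₁ t y x
  ck : ∀ ⦃t s x y : ℝ⦄, 0 < t → 0 < s → 1 < x → 1 < y →
    p₁ (t+s) x y = ∫ w in Set.Ioi (1:ℝ), p₁ t x w * p₁ s w y * w
  mass : ∀ ⦃t x : ℝ⦄, 0 < t → 1 < x →
    (∫ y in Set.Ioi (1:ℝ), p₁ t x y * y) = ∫ u in Set.Ioi t, q x u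
  q1 : ∃ c C : ℝ, 0 < c ∧ c ≤ C ∧ ∀ ⦃x s : ℝ⦄, 1 < x → 0 < s →
    ((s < 2*x →
      c * (((x-1)/Real.sqrt x) * s^(-(3:ℝ)/2) * Real.exp (-(x-1)^2/(2*s))) ≤ q x s ∧
      q x s ≤ C * (((x-1)/Real.sqrt x) * s^(-(3:ℝ)/2) * Real.exp (-(x-1)^2/(2*s)))) ∧
     (2*x ≤ s →
      c * (((x-1)/x) * ((1+Real.log x)/((1+Real.log (s+x))*(1+Real.log (1+s/x)))) *
        s⁻¹ * Real.exp (-(x-1)^2/(2*s))) ≤ q x s ∧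
      q x s ≤ C * (((x-1)/x) * ((1+Real.log x)/((1+Real.log (s+x))*(1+Real.log (1+s/x)))) *
        s⁻¹ * Real.exp (-(x-1)^2/(2*s)))))
  q2 : ∀ ⦃x s : ℝ⦄, 1 < x → 0 < s →
    ((x-1)/Real.sqrt (2*Real.pi*x)) * s^(-(3:ℝ)/2) * Real.exp (-(x-1)^2/(2*s)) ≤ q x s
  surv : ∃ c' C' : ℝ, 0 < c' ∧ c' ≤ C' ∧ ∀ ⦃t x : ℝ⦄, 0 < t → 1 < x →
    c' * min 1 (Real.log x / Real.log (1+Real.sqrt t)) ≤ (∫ u in Set.Ioi t, q x u) ∧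
    (∫ u in Set.Ioi t, q x u) ≤ C' * min 1 (Real.log x / Real.log (1+Real.sqrt t))
  ac : ∀ ⦃t x y : ℝ⦄, 0 < t → 1 < x → 1 < y →
    Real.sqrt (x*y) * hker t x y ≤ p₁ t x y ∧
    p₁ t x y ≤ Real.exp (t/8) * Real.sqrt (x*y) * hker t x y

lemma aux_b (n : ℕ) : (((2*n).factorial : ℝ) / (4^n * (n.factorial:ℝ)^2))^2 * (2*n+1) ≤ 1 := by
  induction n with
  | zero => simp
  | succ k ih =>
    have e : (((2*(k+1)).factorial : ℝ) / (4^(k+1) * ((k+1).factorial:ℝ)^2))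
        = (((2*k).factorial : ℝ) / (4^k * (k.factorial:ℝ)^2)) * ((2*k+1)/(2*k+2)) := by
      have h1 : (2*(k+1)).factorial = (2*k+2) * ((2*k+1) * (2*k).factorial) := by
        rw [show 2*(k+1) = (2*k+1)+1 by ring, Nat.factorial_succ, Nat.factorial_succ]
      rw [h1, Nat.factorial_succ]
      have := Nat.factorial_pos k
      push_cast
      field_simp
      ring
    rw [e, mul_pow]
    set B := (((2*k).factorial : ℝ) / (4^k * (k.factorial:ℝ)^2))^2 with hB
    have hk : (0:ℝ) ≤ k := Nat.cast_nonneg k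
    have hB0 : 0 ≤ B := by positivity
    have : ((2*(k:ℝ)+1)/(2*k+2))^2 * (2*((k+1:ℕ):ℝ)+1) ≤ 2*k+1 := by
      push_cast
      rw [div_pow, div_mul_eq_mul_div, div_le_iff₀ (by positivity)]
      nlinarith
    calc B * ((2*(k:ℝ)+1)/(2*k+2))^2 * (2*((k+1:ℕ):ℝ)+1)
        = B * (((2*(k:ℝ)+1)/(2*k+2))^2 * (2*((k+1:ℕ):ℝ)+1)) := by ring
      _ ≤ B * (2*k+1) := by gcongr
      _ ≤ 1 := ih

lemma I0_term (z : ℝ) (n : ℕ) : (z/2)^(2*n) / ((n.factorial : ℝ))^2 =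
    z^(2*n)/((2*n).factorial : ℝ) * (((2*n).factorial : ℝ) / (4^n * (n.factorial:ℝ)^2)) := by
  have := Nat.factorial_pos n
  have := Nat.factorial_pos (2*n)
  rw [div_pow, pow_mul 2]
  norm_num
  field_simp

lemma aux_b1 (n : ℕ) : (((2*n).factorial : ℝ) / (4^n * (n.factorial:ℝ)^2)) ≤ 1 := by
  have h := aux_b n
  set b := (((2*n).factorial : ℝ) / (4^n * (n.factorial:ℝ)^2))
  have hn : (0:ℝ) ≤ n := Nat.cast_nonneg n
  have : b^2 ≤ 1 := by nlinarith [sq_nonneg b]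
  nlinarith

lemma I0_term_le (z : ℝ) (n : ℕ) : (z/2)^(2*n) / ((n.factorial : ℝ))^2 ≤
    z^(2*n)/((2*n).factorial : ℝ) := by
  rw [I0_term]
  have : 0 ≤ z^(2*n)/((2*n).factorial : ℝ) := by
    apply div_nonneg _ (by positivity)
    rw [pow_mul]; positivity
  exact mul_le_of_le_one_right this (aux_b1 n)

lemma I0_term_nonneg (z : ℝ) (n : ℕ) : 0 ≤ (z/2)^(2*n) / ((n.factorial : ℝ))^2 := by
  apply div_nonneg _ (by positivity)
  rw [pow_mul]; positivity

lemma I0_summable (z : ℝ) : Summable fun n : ℕ => (z/2)^(2*n) / ((n.factorial : ℝ))^2 :=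
  Summable.of_nonneg_of_le (I0_term_nonneg z) (I0_term_le z) (Real.hasSum_cosh z).summable

lemma I0_nonneg (z : ℝ) : 0 ≤ I0 z := tsum_nonneg (I0_term_nonneg z)

lemma I0_le_exp {z : ℝ} (hz : 0 ≤ z) : I0 z ≤ Real.exp z := by
  have h1 : I0 z ≤ Real.cosh z := by
    rw [← (Real.hasSum_cosh z).tsum_eq]
    exact (I0_summable z).tsum_le_tsum (I0_term_le z) (Real.hasSum_cosh z).summable
  have h2 : 0 ≤ Real.sinh z := Real.sinh_nonneg_iff.2 hz
  have := Real.cosh_add_sinh z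
  linarith

lemma I0_le_exp_sqrt {z : ℝ} (hz : 0 < z) : I0 z ≤ Real.exp z / Real.sqrt z := by
  have hs := ((Real.hasSum_cosh z).add (Real.hasSum_sinh z)).mul_left (1/(2*Real.sqrt z))
  rw [Real.cosh_add_sinh] at hs
  have hu : 0 < Real.sqrt z := Real.sqrt_pos.2 hz
  have h1 : I0 z ≤ 1/(2*Real.sqrt z) * Real.exp z := by
    rw [← hs.tsum_eq]
    refine (I0_summable z).tsum_le_tsum (fun n => ?_) hs.summable
    rw [I0_term]
    have hb := aux_b n
    set b := (((2*n).factorial : ℝ) / (4^n * (n.factorial:ℝ)^2))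
    have hf : (((2*n+1).factorial : ℕ) : ℝ) = (2*n+1) * (2*n).factorial := by
      rw [Nat.factorial_succ]; push_cast; ring
    have hfp : (0:ℝ) < (2*n).factorial := by exact_mod_cast Nat.factorial_pos _
    rw [hf, pow_succ]
    set a := z^(2*n)/((2*n).factorial : ℝ) with ha
    have ha0 : 0 ≤ a := by positivity
    have hn : (0:ℝ) < 2*n+1 := by positivity
    have e : z^(2*n) * z / ((2*n+1) * ((2*n).factorial:ℝ)) = a * (z/(2*n+1)) := by
      rw [ha]; field_simp
    rw [e]
    have key : 2 * Real.sqrt z * b ≤ 1 + z/(2*n+1) := by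
      have h3 : 0 ≤ (Real.sqrt z - b*(2*n+1))^2/(2*n+1) := by positivity
      have h4 : (Real.sqrt z - b*(2*n+1))^2/(2*n+1) =
          z/(2*n+1) - 2*Real.sqrt z*b + b^2*(2*n+1) := by
        rw [sub_sq, Real.sq_sqrt hz.le]; field_simp
      linarith
    have : b ≤ 1/(2*Real.sqrt z) * (1 + z/(2*n+1)) := by
      rw [one_div, ← div_eq_inv_mul, le_div_iff₀ (by positivity)]; linarith
    calc a * b ≤ a * (1/(2*Real.sqrt z) * (1 + z/(2*n+1))) := by gcongr
      _ = _ := by ring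
  refine h1.trans ?_
  rw [one_div, ← div_eq_inv_mul]
  gcongr
  linarith

lemma pk_nonneg {t x y : ℝ} (ht : 0 < t) : 0 ≤ pk t x y := by
  unfold pk
  have := I0_nonneg (x*y/t)
  positivity

lemma pk_le {t x y : ℝ} (ht : 0 < t) (hx : 0 < x) (hy : 0 < y) :
    pk t x y ≤ t⁻¹ * Real.exp (-(x-y)^2/(2*t)) := by
  unfold pk
  have h := I0_le_exp (z := x*y/t) (by positivity)
  calc t⁻¹ * Real.exp (-(x^2 + y^2)/(2*t)) * I0 (x*y/t)
      ≤ t⁻¹ * Real.exp (-(x^2 + y^2)/(2*t)) * Real.exp (x*y/t) := by gcongr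
    _ = _ := by
      rw [mul_assoc, ← Real.exp_add]; congr 2; field_simp; ring

lemma pk_le' {t x y : ℝ} (ht : 0 < t) (hx : 0 < x) (hy : 0 < y) :
    pk t x y ≤ (Real.sqrt t)⁻¹ * (Real.sqrt (x*y))⁻¹ * Real.exp (-(x-y)^2/(2*t)) := by
  unfold pk
  have h := I0_le_exp_sqrt (z := x*y/t) (by positivity)
  have hst : 0 < Real.sqrt t := Real.sqrt_pos.2 ht
  have hsx : 0 < Real.sqrt (x*y) := Real.sqrt_pos.2 (by positivity)
  calc t⁻¹ * Real.exp (-(x^2 + y^2)/(2*t)) * I0 (x*y/t)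
      ≤ t⁻¹ * Real.exp (-(x^2 + y^2)/(2*t)) * (Real.exp (x*y/t) / Real.sqrt (x*y/t)) := by gcongr
    _ = (t⁻¹ * (Real.sqrt t / Real.sqrt (x*y))) *
          (Real.exp (-(x^2 + y^2)/(2*t)) * Real.exp (x*y/t)) := by
      rw [Real.sqrt_div (by positivity)]; field_simp
    _ = _ := by
      have e1 : t⁻¹ * (Real.sqrt t / Real.sqrt (x*y)) = (Real.sqrt t)⁻¹ * (Real.sqrt (x*y))⁻¹ := by
        have : t⁻¹ = (Real.sqrt t)⁻¹ * (Real.sqrt t)⁻¹ := by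
          rw [← mul_inv, Real.mul_self_sqrt ht.le]
        rw [this]
        field_simp
      have e2 : -(x^2 + y^2)/(2*t) + x*y/t = -(x-y)^2/(2*t) := by field_simp; ring
      rw [← Real.exp_add, e1, e2]

lemma hk_eq {t x y : ℝ} (ht : 0 < t) (hx : 1 < x) (hy : 1 < y) :
    Real.sqrt (x*y) * hker t x y = (Real.sqrt (2*Real.pi*t))⁻¹ * (Real.sqrt (x*y))⁻¹ *
      Real.exp (-(x-y)^2/(2*t)) * (1 - Real.exp (-(2*(x-1)*(y-1)/t))) := by
  unfold hker
  have hxy : 0 < x*y := by positivity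
  have h1 : (2*Real.pi*t)^(-(1:ℝ)/2) = (Real.sqrt (2*Real.pi*t))⁻¹ := by
    rw [neg_div, Real.rpow_neg (by positivity), Real.sqrt_eq_rpow]
  have h2 : Real.exp (-(x+y-2)^2/(2*t)) =
      Real.exp (-(x-y)^2/(2*t)) * Real.exp (-(2*(x-1)*(y-1)/t)) := by
    rw [← Real.exp_add]; congr 1; field_simp; ring
  have h3 : (x*y)⁻¹ = (Real.sqrt (x*y))⁻¹ * (Real.sqrt (x*y))⁻¹ := by
    rw [← mul_inv, Real.mul_self_sqrt hxy.le]
  have hsx : 0 < Real.sqrt (x*y) := Real.sqrt_pos.2 (by positivity)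
  rw [h1, h2, h3]
  field_simp

lemma one_sub_exp {v : ℝ} (hv : 0 ≤ v) : min 1 v / 2 ≤ 1 - Real.exp (-v) := by
  have h := Real.add_one_le_exp v
  have h1 : Real.exp (-v) ≤ 1/(1+v) := by
    rw [Real.exp_neg, ← one_div]; apply one_div_le_one_div_of_le <;> linarith
  have h2 : min 1 v / 2 ≤ 1 - 1/(1+v) := by
    rw [show 1 - 1/(1+v) = v/(1+v) by field_simp; ring, div_le_div_iff₀ (by norm_num) (by linarith)]
    rcases le_total 1 v with h | h
    · rw [min_eq_left h]; linarith
    · rw [min_eq_right h]; nlinarith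
  linarith


lemma p1_le_pk {p₁ : ℝ → ℝ → ℝ → ℝ} {q : ℝ → ℝ → ℝ} (H : BesselHK p₁ q)
    {t x y : ℝ} (ht : 0 < t) (hx : 1 < x) (hy : 1 < y) : p₁ t x y ≤ pk t x y := by
  rw [H.hunt ht hx hy]
  have : 0 ≤ ∫ u in Set.Ioo 0 t, q x u * pk (t-u) 1 y := by
    apply setIntegral_nonneg measurableSet_Ioo
    intro u hu
    exact mul_nonneg (H.q_nonneg hx hu.1) (pk_nonneg (by linarith [hu.2]))
  linarith

lemma p1_lower {p₁ : ℝ → ℝ → ℝ → ℝ} {q : ℝ → ℝ → ℝ} (H : BesselHK p₁ q)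
    {t x y : ℝ} (ht : 0 < t) (hx : 1 < x) (hy : 1 < y) :
    (Real.sqrt (2*Real.pi*t))⁻¹ * (Real.sqrt (x*y))⁻¹ *
      Real.exp (-(x-y)^2/(2*t)) * (1 - Real.exp (-(2*(x-1)*(y-1)/t))) ≤ p₁ t x y := by
  rw [← hk_eq ht hx hy]; exact (H.ac ht hx hy).1

lemma p1_upper {p₁ : ℝ → ℝ → ℝ → ℝ} {q : ℝ → ℝ → ℝ} (H : BesselHK p₁ q)
    {t x y : ℝ} (ht : 1 ≤ t) (hx : 1 < x) (hy : 1 < y) :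
    p₁ t x y ≤ Real.exp (t/8) * Real.exp (-(x-y)^2/(2*t)) * (2*(x-1)*y) := by
  have h0 : 0 < t := by linarith
  refine (H.ac h0 hx hy).2.trans ?_
  rw [mul_assoc, hk_eq h0 hx hy, mul_assoc (Real.exp (t/8))]
  refine mul_le_mul_of_nonneg_left ?_ (Real.exp_pos _).le
  have h1 : (Real.sqrt (2*Real.pi*t))⁻¹ ≤ 1 := by
    apply inv_le_one_of_one_le₀
    rw [Real.one_le_sqrt]
    nlinarith [Real.pi_gt_three]
  have h2 : (Real.sqrt (x*y))⁻¹ ≤ 1 := by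
    apply inv_le_one_of_one_le₀
    rw [Real.one_le_sqrt]
    nlinarith
  have h3 : 1 - Real.exp (-(2*(x-1)*(y-1)/t)) ≤ 2*(x-1)*y := by
    have := Real.add_one_le_exp (-(2*(x-1)*(y-1)/t))
    have h4 : 2*(x-1)*(y-1)/t ≤ 2*(x-1)*(y-1) :=
      div_le_self (mul_nonneg (by linarith) (by linarith)) ht
    nlinarith
  have h5 : 0 ≤ 1 - Real.exp (-(2*(x-1)*(y-1)/t)) := by
    rw [sub_nonneg, Real.exp_le_one_iff, neg_nonpos]
    exact div_nonneg (mul_nonneg (by linarith) (by linarith)) h0.le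
  calc _ ≤ 1 * 1 * Real.exp (-(x-y)^2/(2*t)) * (1 - Real.exp (-(2*(x-1)*(y-1)/t))) := by
        gcongr
    _ ≤ 1 * 1 * Real.exp (-(x-y)^2/(2*t)) * (2*(x-1)*y) := by gcongr
    _ = _ := by ring

lemma p1_integrable {p₁ : ℝ → ℝ → ℝ → ℝ} {q : ℝ → ℝ → ℝ} (H : BesselHK p₁ q)
    {t x : ℝ} (ht : 0 < t) (hx : 1 < x) :
    IntegrableOn (fun y => p₁ t x y * y) (Set.Ioi 1) := by
  by_contra hn
  have h1 := H.mass ht hx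
  rw [integral_undef hn] at h1
  obtain ⟨c, C, hc, -, h⟩ := H.surv
  have h2 := (h ht hx).1
  rw [← h1] at h2
  have h3 : 0 < min 1 (Real.log x / Real.log (1+Real.sqrt t)) := by
    apply lt_min one_pos
    have := Real.sqrt_pos.2 ht
    exact div_pos (Real.log_pos hx) (Real.log_pos (by linarith))
  nlinarith [mul_pos hc h3]

lemma p1_pos {p₁ : ℝ → ℝ → ℝ → ℝ} {q : ℝ → ℝ → ℝ} (H : BesselHK p₁ q)
    {t x y : ℝ} (ht : 0 < t) (hx : 1 < x) (hy : 1 < y) : 0 < p₁ t x y := by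
  refine lt_of_lt_of_le ?_ (p1_lower H ht hx hy)
  have h5 : 0 < 1 - Real.exp (-(2*(x-1)*(y-1)/t)) := by
    rw [sub_pos, Real.exp_lt_one_iff, neg_lt_zero]
    exact div_pos (mul_pos (by linarith) (by linarith)) ht
  have : 0 < x * y := by positivity
  have := Real.pi_pos
  positivity

lemma ck_integrable {p₁ : ℝ → ℝ → ℝ → ℝ} {q : ℝ → ℝ → ℝ} (H : BesselHK p₁ q)
    {t s x y : ℝ} (ht : 0 < t) (hs : 0 < s) (hx : 1 < x) (hy : 1 < y) :
    IntegrableOn (fun w => p₁ t x w * p₁ s w y * w) (Set.Ioi 1) := by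
  by_contra hn
  have h1 := H.ck ht hs hx hy
  rw [integral_undef hn] at h1
  linarith [p1_pos H (add_pos ht hs) hx hy]

lemma exp_shift {s y z : ℝ} (hs : 0 < s) :
    Real.exp (-(y-z)^2/(2*s)) ≤ Real.exp (-z^2/(4*s)) * Real.exp (y^2/(2*s)) := by
  rw [← Real.exp_add, Real.exp_le_exp]
  have : -z^2/(4*s) + y^2/(2*s) - -(y-z)^2/(2*s) = (z-2*y)^2/(4*s) := by field_simp; ring
  have h2 : 0 ≤ (z-2*y)^2/(4*s) := by positivity
  linarith

lemma log_mono1 {x r : ℝ} (hr : 8 ≤ r) (hx : 1 < x) :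
    min 1 (Real.log x / Real.log (1+Real.sqrt r)) ≤ 2 * min 1 (Real.log x / Real.log (1+r)) := by
  have hs : 0 < Real.sqrt r := Real.sqrt_pos.2 (by linarith)
  have h1 : Real.log (1+r) ≤ 2 * Real.log (1+Real.sqrt r) := by
    rw [show (2:ℝ) * Real.log (1+Real.sqrt r) = Real.log ((1+Real.sqrt r)^2) by
      rw [Real.log_pow]; norm_num]
    apply Real.log_le_log (by linarith)
    nlinarith [Real.sq_sqrt (show (0:ℝ) ≤ r by linarith)]
  have hl := Real.log_pos hx
  have h2 : 0 < Real.log (1+r) := Real.log_pos (by linarith)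
  have h3 : 0 < Real.log (1+Real.sqrt r) := Real.log_pos (by linarith)
  rw [mul_min_of_nonneg _ _ (by norm_num)]
  apply min_le_min (by norm_num)
  rw [← mul_div_assoc, div_le_div_iff₀ h3 h2]
  nlinarith


/-- exponential far-field bound at time `r` -/
lemma far {p₁ : ℝ → ℝ → ℝ → ℝ} {q : ℝ → ℝ → ℝ} (H : BesselHK p₁ q)
    {r x y : ℝ} (hr : 8 ≤ r) (hx : 1 < x) (hxr : x^2 ≤ r) (hy : 32*r < y) :
    p₁ r x y * Real.exp (y^2/(2*r^2)) * y ≤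
      4 * Real.exp (1/2) * min 1 (Real.log x / Real.log (1+r)) * Real.exp (-y) := by
  have hr0 : 0 < r := by linarith
  have hy1 : 1 < y := by linarith
  have h := p1_upper H (t := r) (by linarith) hx hy1
  have h2 := exp_shift (s := r) (y := x) (z := y) hr0
  have hlog : 0 < Real.log x := Real.log_pos hx
  have hxr' : x ≤ r := by nlinarith
  have hexp : Real.exp (r/8) * (Real.exp (-y^2/(4*r)) * Real.exp (x^2/(2*r))) *
      Real.exp (y^2/(2*r^2)) ≤ Real.exp (1/2) * Real.exp (-5*y) := by
    rw [← Real.exp_add, ← Real.exp_add, ← Real.exp_add, ← Real.exp_add, Real.exp_le_exp]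
    have a1 : x^2/(2*r) ≤ 1/2 := by
      rw [div_le_iff₀ (by positivity)]; linarith
    have a2 : y^2/(2*r^2) ≤ (y^2/r)/16 := by
      rw [div_div, div_le_div_iff₀ (by positivity) (by positivity)]
      nlinarith [mul_nonneg (sq_nonneg y) (mul_nonneg hr0.le (sub_nonneg.2 hr))]
    have a3 : 32*y ≤ y^2/r := by
      rw [le_div_iff₀ hr0]; nlinarith
    have a4 : -y^2/(4*r) = -(y^2/r)/4 := by field_simp
    rw [a4]
    linarith
  have hy2 : y^2 ≤ 2 * Real.exp y := by
    have := Real.quadratic_le_exp_of_nonneg (x := y) (by linarith)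
    linarith
  have hxm : (x-1) * Real.exp (-3*y) ≤ min 1 (Real.log x / Real.log (1+r)) := by
    have b1 : x - 1 ≤ x * Real.log x := by
      have := Real.one_sub_inv_le_log_of_pos (x := x) (by linarith)
      have h3 : x * (1 - x⁻¹) ≤ x * Real.log x := by gcongr
      rwa [mul_sub, mul_inv_cancel₀ (by linarith), mul_one] at h3
    have b2 : Real.exp (-3*y) ≤ (Real.exp (-r))*(Real.exp (-r)) := by
      rw [← Real.exp_add, Real.exp_le_exp]; linarith
    have b3 : r * Real.exp (-r) ≤ 1 := by
      rw [Real.exp_neg, ← div_eq_mul_inv, div_le_one (Real.exp_pos _)]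
      linarith [Real.add_one_le_exp r]
    have b5 : 0 < Real.log (1+r) := Real.log_pos (by linarith)
    have b4 : Real.log (1+r) * Real.exp (-r) ≤ 1 := by
      have : Real.log (1+r) ≤ r := by
        have := Real.log_le_sub_one_of_pos (x := 1+r) (by linarith)
        linarith
      calc _ ≤ r * Real.exp (-r) := by gcongr
        _ ≤ 1 := b3
    have b6 : Real.exp (-r) ≤ 1 := by rw [Real.exp_le_one_iff]; linarith
    apply le_min
    · calc (x-1) * Real.exp (-3*y) ≤ r * (Real.exp (-r) * Real.exp (-r)) := by
            apply mul_le_mul (by linarith) b2 (Real.exp_pos _).le hr0.le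
        _ = (r * Real.exp (-r)) * Real.exp (-r) := by ring
        _ ≤ 1 * 1 := by gcongr
        _ = 1 := by norm_num
    · rw [le_div_iff₀ b5]
      calc (x-1) * Real.exp (-3*y) * Real.log (1+r)
          ≤ (r * Real.log x) * (Real.exp (-r) * Real.exp (-r)) * Real.log (1+r) := by
            apply mul_le_mul_of_nonneg_right _ b5.le
            apply mul_le_mul _ b2 (Real.exp_pos _).le (by positivity)
            exact b1.trans (by gcongr)
        _ = Real.log x * ((r * Real.exp (-r)) * (Real.log (1+r) * Real.exp (-r))) := by ring
        _ ≤ Real.log x * (1 * 1) := by gcongr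
        _ = Real.log x := by ring
  have hx1 : 0 ≤ x - 1 := by linarith
  calc p₁ r x y * Real.exp (y^2/(2*r^2)) * y
      ≤ (Real.exp (r/8) * (Real.exp (-y^2/(4*r)) * Real.exp (x^2/(2*r))) * (2*(x-1)*y)) *
          Real.exp (y^2/(2*r^2)) * y := by
        gcongr
        exact h.trans (by gcongr)
    _ = (Real.exp (r/8) * (Real.exp (-y^2/(4*r)) * Real.exp (x^2/(2*r))) *
          Real.exp (y^2/(2*r^2))) * (2*(x-1)*y^2) := by ring
    _ ≤ (Real.exp (1/2) * Real.exp (-5*y)) * (2*(x-1)*(2*Real.exp y)) := by gcongr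
    _ = 4 * Real.exp (1/2) * ((x-1) * (Real.exp (-5*y) * Real.exp y)) := by ring
    _ = 4 * Real.exp (1/2) * ((x-1) * Real.exp (-3*y)) * Real.exp (-y) := by
        have : Real.exp (-5*y) * Real.exp y = Real.exp (-3*y) * Real.exp (-y) := by
          rw [← Real.exp_add, ← Real.exp_add]; congr 1; ring
        rw [this]; ring
    _ ≤ _ := by gcongr

lemma upper {p₁ : ℝ → ℝ → ℝ → ℝ} {q : ℝ → ℝ → ℝ} (H : BesselHK p₁ q)
    : ∃ C : ℝ, 0 < C ∧ ∀ r x z : ℝ, 8 ≤ r → 1 < x → x ≤ r → 1 < z →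
    p₁ (r^2) x z ≤ C * (min 1 (Real.log x / Real.log (1+r)) / r^2) *
      Real.exp (-z^2/(4*r^2)) := by
  obtain ⟨c', C', hc', hcC, hsurv⟩ := H.surv
  have hC' : 0 < C' := by linarith
  refine ⟨2*(Real.exp 512 * (2*C') + 4*Real.exp (1/2)) + 4 * Real.exp (1/2), by positivity, ?_⟩
  intro r x z hr hx hxr hz
  have hr0 : 0 < r := by linarith
  have hl : 0 < Real.log (1+r) := Real.log_pos (by linarith)
  have hlx : 0 < Real.log x := Real.log_pos hx
  set m := min 1 (Real.log x / Real.log (1+r)) with hm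
  have hm0 : 0 < m := lt_min one_pos (div_pos hlx hl)
  rcases le_or_gt r (x^2) with hcase | hcase
  · have hm4 : 1/4 ≤ m := by
      apply le_min (by norm_num)
      rw [le_div_iff₀ hl]
      have : Real.log (1+r) ≤ Real.log (x^4) := by
        apply Real.log_le_log (by linarith)
        nlinarith
      rw [Real.log_pow] at this
      push_cast at this; linarith
    have h1 := p1_le_pk H (t := r^2) (by positivity) hx hz
    have h2 := pk_le (t := r^2) (x := x) (y := z) (by positivity) (by linarith) (by linarith)
    have h3 := exp_shift (s := r^2) (y := x) (z := z) (by positivity)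
    have h4 : Real.exp (x^2/(2*r^2)) ≤ Real.exp (1/2) := by
      rw [Real.exp_le_exp, div_le_iff₀ (by positivity)]; nlinarith
    calc p₁ (r^2) x z ≤ (r^2)⁻¹ * (Real.exp (-z^2/(4*r^2)) * Real.exp (1/2)) :=
          h1.trans (h2.trans (by gcongr; exact h3.trans (by gcongr)))
      _ = (4 * Real.exp (1/2)) * ((1/4) / r^2) * Real.exp (-z^2/(4*r^2)) := by
          field_simp
      _ ≤ _ := by
          gcongr
          have : 0 < 2*(Real.exp 512 * (2*C') + 4*Real.exp (1/2)) := by positivity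
          linarith
  · have hsr : 0 < r^2 - r := by nlinarith
    have hck := H.ck hr0 hsr hx hz
    rw [show r + (r^2 - r) = r^2 by ring] at hck
    rw [hck]
    set A := 2/r^2 * Real.exp (-z^2/(4*r^2)) with hA
    have hA0 : 0 < A := by positivity
    have hint1 := p1_integrable H hr0 hx
    have hint2 : IntegrableOn (fun y : ℝ => Real.exp (-y)) (Set.Ioi 1) := integrableOn_exp_neg_Ioi 1
    have hg : IntegrableOn (fun y => A * (Real.exp 512 * (p₁ r x y * y) +
        4 * Real.exp (1/2) * m * Real.exp (-y))) (Set.Ioi 1) :=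
      ((hint1.const_mul _).add (hint2.const_mul _)).const_mul _
    have hle : ∀ y ∈ Set.Ioi (1:ℝ), p₁ r x y * p₁ (r^2-r) y z * y ≤
        A * (Real.exp 512 * (p₁ r x y * y) + 4 * Real.exp (1/2) * m * Real.exp (-y)) := by
      intro y hy
      have hy1 : 1 < y := hy
      have hp := H.p₁_nonneg hr0 hx hy1
      have k1 : p₁ (r^2-r) y z ≤ A * Real.exp (y^2/(2*r^2)) := by
        refine (p1_le_pk H hsr hy1 hz).trans ((pk_le hsr (by linarith) (by linarith)).trans ?_)
        have k2 : (r^2-r)⁻¹ ≤ 2/r^2 := by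
          rw [inv_le_comm₀ hsr (by positivity), inv_div]
          nlinarith
        have k3 : Real.exp (-(y-z)^2/(2*(r^2-r))) ≤ Real.exp (-(y-z)^2/(2*r^2)) := by
          rw [Real.exp_le_exp, neg_div, neg_div, neg_le_neg_iff]
          gcongr
          linarith
        have k4 := exp_shift (s := r^2) (y := y) (z := z) (by positivity)
        calc _ ≤ 2/r^2 * (Real.exp (-z^2/(4*r^2)) * Real.exp (y^2/(2*r^2))) := by
              gcongr; exact k3.trans k4
          _ = _ := by rw [hA]; ring
      have k5 : p₁ r x y * Real.exp (y^2/(2*r^2)) * y ≤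
          Real.exp 512 * (p₁ r x y * y) + 4 * Real.exp (1/2) * m * Real.exp (-y) := by
        rcases le_or_gt y (32*r) with hyr | hyr
        · have : Real.exp (y^2/(2*r^2)) ≤ Real.exp 512 := by
            rw [Real.exp_le_exp, div_le_iff₀ (by positivity)]; nlinarith
          have h6 : 0 ≤ 4 * Real.exp (1/2) * m * Real.exp (-y) := by positivity
          calc _ ≤ p₁ r x y * Real.exp 512 * y := by gcongr
            _ = Real.exp 512 * (p₁ r x y * y) := by ring
            _ ≤ _ := by linarith
        · have := far H hr hx hcase.le hyr
          have h7 : 0 ≤ Real.exp 512 * (p₁ r x y * y) := by positivity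
          linarith
      calc p₁ r x y * p₁ (r^2-r) y z * y ≤ p₁ r x y * (A * Real.exp (y^2/(2*r^2))) * y := by gcongr
        _ = A * (p₁ r x y * Real.exp (y^2/(2*r^2)) * y) := by ring
        _ ≤ _ := by gcongr
    have hI := setIntegral_mono_on (ck_integrable H hr0 hsr hx hz) hg measurableSet_Ioi hle
    refine hI.trans ?_
    rw [integral_const_mul, integral_add (hint1.const_mul _) (hint2.const_mul _),
      integral_const_mul, integral_const_mul, H.mass hr0 hx, integral_exp_neg_Ioi]
    have s1 := (hsurv hr0 hx).2
    have s2 := log_mono1 hr hx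
    have s3 : (∫ u in Set.Ioi r, q x u) ≤ C' * (2*m) := s1.trans (by gcongr)
    have s4 : Real.exp (-1) ≤ 1 := by rw [Real.exp_le_one_iff]; norm_num
    calc _ ≤ A * (Real.exp 512 * (C' * (2*m)) + 4 * Real.exp (1/2) * m * 1) := by gcongr
      _ = 2*(Real.exp 512 * (2*C') + 4*Real.exp (1/2)) * (m/r^2) * Real.exp (-z^2/(4*r^2)) := by
          rw [hA]; ring
      _ ≤ _ := by
          gcongr
          have : 0 < 4*Real.exp (1/2) := by positivity
          linarith


lemma mid {p₁ : ℝ → ℝ → ℝ → ℝ} {q : ℝ → ℝ → ℝ} (H : BesselHK p₁ q)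
    {a t w r z : ℝ} (ha : 0 < a) (ha1 : a ≤ 1) (ht : 1 < t) (hw : 2 ≤ w) (hrw : r * w = t)
    (hr : 0 < r) (hrt : r^2 ≤ t/4) (har : 2 ≤ a * r) (hz1 : a * r ≤ z) (hz2 : a * z ≤ r) :
    ((Real.sqrt (2*Real.pi/a))⁻¹ * Real.exp (-((1/a)^2/6+2/3)) * (a/4)) *
      (t⁻¹ * Real.exp (-w^2/(2*t))) ≤ p₁ (t-r^2) z w := by
  have hts : 0 < t - r^2 := by linarith
  have hz : 2 ≤ z := har.trans hz1
  have ht0 : 0 < t := by linarith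
  have hpi := Real.pi_pos
  refine le_trans ?_ (p1_lower H hts (by linarith) (by linarith))
  have e1 : (Real.sqrt (2*Real.pi/a))⁻¹ * t⁻¹ ≤
      (Real.sqrt (2*Real.pi*(t-r^2)))⁻¹ * (Real.sqrt (z*w))⁻¹ := by
    rw [← mul_inv, ← mul_inv, ← Real.sqrt_mul (by positivity)]
    have h0 : 0 < Real.sqrt (2*Real.pi*(t-r^2) * (z*w)) := by
      apply Real.sqrt_pos.2
      have : 0 < z * w := by nlinarith
      positivity
    apply inv_anti₀ h0
    rw [show Real.sqrt (2*Real.pi/a) * t = Real.sqrt (2*Real.pi/a * t^2) by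
      rw [Real.sqrt_mul (by positivity), Real.sqrt_sq ht0.le]]
    apply Real.sqrt_le_sqrt
    have h1 : z * w ≤ t / a := by
      rw [le_div_iff₀ ha]; nlinarith
    calc 2*Real.pi*(t-r^2) * (z*w) ≤ 2*Real.pi*t * (t/a) := by
          have : 0 < z * w := by nlinarith
          gcongr
          nlinarith
      _ = _ := by field_simp
  have e2 : Real.exp (-((1/a)^2/6+2/3)) * Real.exp (-w^2/(2*t)) ≤
      Real.exp (-(z-w)^2/(2*(t-r^2))) := by
    rw [← Real.exp_add, Real.exp_le_exp]
    have h1 : (z-w)^2/(2*(t-r^2)) ≤ z^2/(2*(t-r^2)) + w^2/(2*(t-r^2)) := by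
      rw [← add_div]; gcongr
      nlinarith
    have h2 : z^2/(2*(t-r^2)) ≤ (1/a)^2/6 := by
      have : z ≤ r / a := by rw [le_div_iff₀ ha]; linarith
      have h3 : z^2 ≤ (1/a)^2 * r^2 := by
        calc z^2 ≤ (r/a)^2 := by gcongr
          _ = _ := by field_simp
      rw [div_le_iff₀ (by positivity)]
      have h4 : 0 ≤ (1/a)^2 := by positivity
      nlinarith
    have h3 : w^2/(2*(t-r^2)) ≤ w^2/(2*t) + 2/3 := by
      have : w^2/(2*(t-r^2)) - w^2/(2*t) = t/(2*(t-r^2)) := by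
        have hw2 : w^2 * r^2 = t^2 := by rw [← hrw]; ring
        rw [div_sub_div _ _ (by positivity) (by positivity),
          div_eq_div_iff (by positivity) (by positivity)]
        linear_combination (4 * (t-r^2)) * hw2
      have h4 : t/(2*(t-r^2)) ≤ 2/3 := by
        rw [div_le_div_iff₀ (by positivity) (by norm_num)]; linarith
      linarith
    rw [neg_div, neg_div]
    linarith
  have e3 : a/4 ≤ 1 - Real.exp (-(2*(z-1)*(w-1)/(t-r^2))) := by
    have h1 : a/2 ≤ 2*(z-1)*(w-1)/(t-r^2) := by
      rw [le_div_iff₀ hts]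
      have h2 : (z/2)*(w/2) ≤ (z-1)*(w-1) := by
        apply mul_le_mul <;> linarith
      have h3 : a * t ≤ z * w := by rw [← hrw]; nlinarith
      nlinarith [sq_nonneg r]
    refine le_trans ?_ (one_sub_exp (by linarith))
    have : a/2 ≤ min 1 (2*(z-1)*(w-1)/(t-r^2)) := le_min (by linarith) h1
    linarith
  calc _ = ((Real.sqrt (2*Real.pi/a))⁻¹ * t⁻¹) *
        (Real.exp (-((1/a)^2/6+2/3)) * Real.exp (-w^2/(2*t))) * (a/4) := by ring
    _ ≤ _ := by gcongr

lemma caseA {p₁ : ℝ → ℝ → ℝ → ℝ} {q : ℝ → ℝ → ℝ} (H : BesselHK p₁ q)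
    {t x w : ℝ} (ht : 0 < t) (hx : 1 < x) (hw : 1 < w) :
    (Real.sqrt (2*Real.pi))⁻¹ * (min 1 (2*(x-1)*(w-1)/t) / 2) * pk t x w ≤ p₁ t x w := by
  refine le_trans ?_ (p1_lower H ht hx hw)
  have hv : 0 ≤ 2*(x-1)*(w-1)/t :=
    div_nonneg (mul_nonneg (by linarith) (by linarith)) ht.le
  have h1 := one_sub_exp hv
  have h2 := pk_le' ht (show 0 < x by linarith) (show 0 < w by linarith)
  have h3 : 0 ≤ min 1 (2*(x-1)*(w-1)/t) := le_min (by norm_num) hv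
  have hpi := Real.pi_pos
  calc _ ≤ (Real.sqrt (2*Real.pi))⁻¹ * (1 - Real.exp (-(2*(x-1)*(w-1)/t))) *
        ((Real.sqrt t)⁻¹ * (Real.sqrt (x*w))⁻¹ * Real.exp (-(x-w)^2/(2*t))) := by
        have := pk_nonneg (x := x) (y := w) ht
        have h4 : 0 ≤ 1 - Real.exp (-(2*(x-1)*(w-1)/t)) := le_trans (by positivity) h1
        gcongr
    _ = _ := by
        rw [Real.sqrt_mul (by positivity) t, mul_inv]; ring

lemma out_bound {a r z : ℝ} (ha : 0 < a) (hr : 0 < r) (hz : 0 < z)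
    (h : z < a * r ∨ r < a * z) :
    z * Real.exp (-z^2/(4*r^2)) ≤ 8 * a * r * Real.exp (-(1/(8*r^2)) * z^2) := by
  set E := Real.exp (-(1/(8*r^2)) * z^2) with hE
  have hE0 : 0 < E := Real.exp_pos _
  have e : Real.exp (-z^2/(4*r^2)) = E * E := by
    rw [hE, ← Real.exp_add]; congr 1; field_simp; ring
  have hk : (1 + z^2/(8*r^2)) * E ≤ 1 := by
    have h1 := Real.add_one_le_exp ((1/(8*r^2)) * z^2)
    have h2 : E = (Real.exp ((1/(8*r^2)) * z^2))⁻¹ := by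
      rw [hE, ← Real.exp_neg]; congr 1; ring
    rw [h2, ← div_eq_mul_inv, div_le_one (Real.exp_pos _)]
    refine le_trans (le_of_eq ?_) h1
    ring
  have hE1 : E ≤ 1 := by
    have : 0 ≤ z^2/(8*r^2) * E := by positivity
    linarith
  have h3 : z * E ≤ 8 * a * r := by
    rcases h with h | h
    · have : 0 < a * r := by positivity
      nlinarith
    · have h5 : z^2/(8*r^2) * E ≤ 1 := by linarith
      have h6 : z^2 * E ≤ 8*r^2 := by
        rw [div_mul_eq_mul_div, div_le_one (by positivity)] at h5; exact h5
      have h7 : r * (z*E) ≤ r * (8*a*r) := by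
        calc r * (z*E) ≤ (a*z) * (z*E) := by gcongr
          _ = a * (z^2*E) := by ring
          _ ≤ a * (8*r^2) := by gcongr
          _ = _ := by ring
      exact le_of_mul_le_mul_left h7 hr
  rw [e]
  calc z * (E*E) = (z*E)*E := by ring
    _ ≤ _ := by gcongr

lemma gauss_bound {r : ℝ} (hr : 0 < r) :
    IntegrableOn (fun z : ℝ => Real.exp (-(1/(8*r^2)) * z^2)) (Set.Ioi 1) ∧
    (∫ z in Set.Ioi (1:ℝ), Real.exp (-(1/(8*r^2)) * z^2)) ≤ 3 * r := by
  have hb : 0 < 1/(8*r^2) := by positivity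
  have hi : Integrable (fun z : ℝ => Real.exp (-(1/(8*r^2)) * z^2)) := integrable_exp_neg_mul_sq hb
  refine ⟨hi.integrableOn, ?_⟩
  have h1 : (∫ z in Set.Ioi (1:ℝ), Real.exp (-(1/(8*r^2)) * z^2)) ≤
      ∫ z in Set.Ioi (0:ℝ), Real.exp (-(1/(8*r^2)) * z^2) := by
    apply setIntegral_mono_set hi.integrableOn
    · filter_upwards with z using (Real.exp_pos _).le
    · exact (Set.Ioi_subset_Ioi (by norm_num)).eventuallyLE
  rw [integral_gaussian_Ioi] at h1
  have h2 : Real.sqrt (Real.pi / (1/(8*r^2))) ≤ 6 * r := by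
    apply Real.sqrt_le_iff.2 ⟨by positivity, ?_⟩
    rw [div_div_eq_mul_div, div_one]
    nlinarith [Real.pi_lt_d2, sq_nonneg r, sq_pos_of_pos hr]
  linarith

set_option maxHeartbeats 2000000 in
theorem bessel_heat_kernel_lower_bound_midstep (p₁ : ℝ → ℝ → ℝ → ℝ) (q : ℝ → ℝ → ℝ)
    (H : BesselHK p₁ q) :
    ∃ c : ℝ, 0 < c ∧ ∀ t x w : ℝ, 1 < t → 1 < x → x < w/2 → 1 + 2*Real.sqrt t < w →
      c * min 1 (Real.log x / Real.log (3*t)) * pk t x w ≤ p₁ t x w := by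
  obtain ⟨c', C', hc', hcC, hsurv⟩ := H.surv
  obtain ⟨K, hK, hU⟩ := upper H
  have hpi := Real.pi_pos
  obtain ⟨a, ha, ha1, haK⟩ : ∃ a : ℝ, 0 < a ∧ a ≤ 1 ∧ 24 * K * a ≤ c'/2 := by
    refine ⟨min 1 (c'/(48*K)), by positivity, min_le_left _ _, ?_⟩
    have := min_le_right 1 (c'/(48*K))
    calc 24 * K * min 1 (c'/(48*K)) ≤ 24 * K * (c'/(48*K)) := by gcongr
      _ = c'/2 := by field_simp; norm_num
  obtain ⟨R, hR8, hRa⟩ : ∃ R : ℝ, 8 ≤ R ∧ 2 ≤ a * R := by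
    refine ⟨max 8 (2/a), le_max_left _ _, ?_⟩
    calc 2 = a * (2/a) := by field_simp
      _ ≤ _ := by gcongr; exact le_max_right _ _
  have hR0 : 0 < R := by linarith
  set c0 := (Real.sqrt (2*Real.pi/a))⁻¹ * Real.exp (-((1/a)^2/6+2/3)) * (a/4) with hc0
  have hc0p : 0 < c0 := by positivity
  set cA := (Real.sqrt (2*Real.pi))⁻¹ * ((1/R) / 2) with hcA
  have hcAp : 0 < cA := by positivity
  set cB := c0 * (c'/2) * Real.exp (-1) with hcB
  have hcBp : 0 < cB := by positivity
  refine ⟨min cA cB, lt_min hcAp hcBp, ?_⟩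
  intro t x w ht hx hxw hw
  have ht0 : 0 < t := by linarith
  have hst : 1 ≤ Real.sqrt t := by rw [Real.one_le_sqrt]; exact ht.le
  have hw3 : 3 < w := by linarith
  have hlx : 0 < Real.log x := Real.log_pos hx
  have hl3 : 1 ≤ Real.log (3*t) := by
    rw [Real.le_log_iff_exp_le (by linarith)]
    linarith [Real.exp_one_lt_d9]
  set L := min 1 (Real.log x / Real.log (3*t)) with hL
  have hL0 : 0 ≤ L := le_min (by norm_num) (by positivity)
  have hL1 : L ≤ 1 := min_le_left _ _
  have hLx : L ≤ x - 1 := by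
    calc L ≤ Real.log x / Real.log (3*t) := min_le_right _ _
      _ ≤ Real.log x := div_le_self hlx.le hl3
      _ ≤ x - 1 := Real.log_le_sub_one_of_pos (by linarith)
  have hpk := pk_nonneg (x := x) (y := w) ht0
  -- easy case
  have easy : (1/R) * L ≤ min 1 (2*(x-1)*(w-1)/t) →
      min cA cB * L * pk t x w ≤ p₁ t x w := by
    intro h
    refine le_trans ?_ (caseA H ht0 hx (by linarith))
    calc min cA cB * L * pk t x w ≤ cA * L * pk t x w := by
          gcongr; exact min_le_left _ _
      _ = (Real.sqrt (2*Real.pi))⁻¹ * ((1/R * L) / 2) * pk t x w := by rw [hcA]; ring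
      _ ≤ _ := by gcongr
  have hRL : (1/R) * L ≤ 1 := by
    have : 1/R ≤ 1 := by rw [div_le_one hR0]; linarith
    calc (1/R)*L ≤ 1 * 1 := by gcongr
      _ = 1 := by norm_num
  rcases le_or_gt t (R*w) with hcase | hcase
  · apply easy
    apply le_min hRL
    rw [le_div_iff₀ ht0]
    calc 1/R * L * t ≤ 1/R * (x-1) * (R*w) := by gcongr
      _ = (x-1)*w := by field_simp
      _ ≤ 2*(x-1)*(w-1) := by nlinarith
  rcases le_or_gt t (x*w) with hcase2 | hcase2
  · apply easy
    apply le_min hRL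
    have hxR : 8 ≤ x := by nlinarith
    have : 1/R * L ≤ 1/2 := by
      have : 1/R ≤ 1/2 := by rw [div_le_div_iff₀ hR0 (by norm_num)]; linarith
      calc (1/R)*L ≤ 1/2 * 1 := by gcongr
        _ = 1/2 := by norm_num
    refine this.trans ?_
    rw [le_div_iff₀ ht0]
    nlinarith
  -- main case
  set r := t/w with hr
  have hrw : r * w = t := by rw [hr]; field_simp
  have hr0 : 0 < r := by positivity
  have hRr : R ≤ r := by rw [hr, le_div_iff₀ (by linarith)]; exact hcase.le
  have hxr : x ≤ r := by rw [hr, le_div_iff₀ (by linarith)]; exact hcase2.le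
  have hrt : r^2 ≤ t/4 := by
    have h1 : 4 * t ≤ w^2 := by nlinarith [Real.sq_sqrt ht0.le]
    have h2 : r^2 * w^2 = t^2 := by rw [← mul_pow, hrw]
    have h3 : r^2 * (4*t) ≤ t^2 := by rw [← h2]; gcongr
    have h4 : r^2 * 4 ≤ t := le_of_mul_le_mul_right (by linarith) ht0
    linarith
  have hl1 : 0 < Real.log (1+r) := Real.log_pos (by linarith)
  set m := min 1 (Real.log x / Real.log (1+r)) with hm
  have hm0 : 0 < m := lt_min one_pos (div_pos hlx hl1)
  have hLm : L ≤ m := by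
    apply min_le_min le_rfl
    apply div_le_div_of_nonneg_left hlx.le hl1
    apply Real.log_le_log (by linarith)
    have : r ≤ t := by rw [hr]; exact div_le_self ht0.le (by linarith)
    linarith
  set g := t⁻¹ * Real.exp (-w^2/(2*t)) with hg
  have hg0 : 0 < g := by positivity
  have hr20 : 0 < r^2 := by positivity
  have hts : 0 < t - r^2 := by linarith
  have hmain : c0 * (c'/2) * g * m ≤ p₁ t x w := by
    have hck := H.ck hr20 hts hx (show 1 < w by linarith)
    rw [show r^2 + (t-r^2) = t by ring] at hck
    rw [hck]
    obtain ⟨hgi, hgb⟩ := gauss_bound hr0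
    have hpi1 := p1_integrable H hr20 hx
    have hle : ∀ z ∈ Set.Ioi (1:ℝ),
        c0 * g * (p₁ (r^2) x z * z - K*(m/r^2)*(8*a*r) * Real.exp (-(1/(8*r^2)) * z^2)) ≤
          p₁ (r^2) x z * p₁ (t-r^2) z w * z := by
      intro z hz
      have hz1 : 1 < z := hz
      have hp := H.p₁_nonneg hr20 hx hz1
      have hp' := H.p₁_nonneg hts hz1 (show 1 < w by linarith)
      by_cases hreg : a*r ≤ z ∧ a*z ≤ r
      · have hmid := mid H ha ha1 ht (show 2 ≤ w by linarith) hrw hr0 hrt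
          (hRa.trans (by gcongr)) hreg.1 hreg.2
        calc _ ≤ c0 * g * (p₁ (r^2) x z * z) := by
              gcongr
              have : 0 ≤ K*(m/r^2)*(8*a*r) * Real.exp (-(1/(8*r^2)) * z^2) := by positivity
              linarith
          _ = p₁ (r^2) x z * (c0*g) * z := by ring
          _ ≤ _ := by gcongr
      · have ho : z < a*r ∨ r < a*z := by
          by_contra hcon
          push Not at hcon
          exact hreg hcon
        have hb := out_bound ha hr0 (show 0 < z by linarith) ho
        have hu := hU r x z (hR8.trans hRr) hx hxr hz1
        have h1 : p₁ (r^2) x z * z ≤ K*(m/r^2)*(8*a*r) * Real.exp (-(1/(8*r^2)) * z^2) := by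
          calc p₁ (r^2) x z * z ≤ (K*(m/r^2)*Real.exp (-z^2/(4*r^2))) * z := by gcongr
            _ = K*(m/r^2)*(z*Real.exp (-z^2/(4*r^2))) := by ring
            _ ≤ K*(m/r^2)*(8*a*r * Real.exp (-(1/(8*r^2)) * z^2)) := by gcongr
            _ = _ := by ring
        calc _ ≤ (0:ℝ) := mul_nonpos_of_nonneg_of_nonpos (by positivity) (by linarith)
          _ ≤ _ := by positivity
    have hI := setIntegral_mono_on ((hpi1.sub (hgi.const_mul _)).const_mul _)
      (ck_integrable H hr20 hts hx (show 1 < w by linarith)) measurableSet_Ioi hle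
    refine le_trans ?_ hI
    rw [integral_const_mul, integral_sub' hpi1 (hgi.const_mul _), integral_const_mul,
      H.mass hr20 hx]
    have hs := (hsurv hr20 hx).1
    rw [Real.sqrt_sq hr0.le] at hs
    have hb : K*(m/r^2)*(8*a*r) * (∫ z in Set.Ioi (1:ℝ), Real.exp (-(1/(8*r^2)) * z^2)) ≤
        c'/2 * m := by
      calc _ ≤ K*(m/r^2)*(8*a*r) * (3*r) := by gcongr
        _ = (24*K*a) * m := by field_simp; norm_num
        _ ≤ _ := by gcongr
    calc c0 * (c'/2) * g * m = c0 * g * (c' * m - c'/2*m) := by ring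
      _ ≤ _ := by gcongr
  have hpkg : pk t x w ≤ Real.exp 1 * g := by
    refine (pk_le ht0 (by linarith) (by linarith)).trans ?_
    rw [hg, mul_left_comm, ← Real.exp_add]
    gcongr
    have : -(x-w)^2/(2*t) = -w^2/(2*t) + (x*w)/t - x^2/(2*t) := by field_simp; ring
    have h1 : (x*w)/t ≤ 1 := by rw [div_le_one ht0]; exact hcase2.le
    have h2 : 0 ≤ x^2/(2*t) := by positivity
    linarith
  refine le_trans ?_ hmain
  calc min cA cB * L * pk t x w ≤ cB * m * (Real.exp 1 * g) := by
        gcongr; exact min_le_right _ _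
    _ = c0 * (c'/2) * g * m * (Real.exp (-1) * Real.exp 1) := by rw [hcB]; ring
    _ = _ := by rw [← Real.exp_add]; norm_num
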